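/- Let q be a prime power and let 3 ≤ h ≤ k be integers, and let D_4 = { x ∈ 𝔽_q^k \ {0} : x_1·x_2·⋯·x_h = 0 }. Then: (a) n := #D_4 = q^{k−h}(q^h − (q−1)^h) − 1; (b) if h < k, then every α ∈ 𝔽_q^k having a nonzero coordinate among positions h+1, …, k satisfies #{ P ∈ D_4 : ⟨α,P⟩ ≠ 0 } = n − q^{k−1} + q^{k−h−1}(q−1)^h + 1, and there are exactly q^k − q^h such α; (c) for every s ∈ {1, …, h}, every α ∈ 𝔽_q^k with α_m = 0 for all m > h and with exactly s nonzero coordinates among the first h satisfies #{ P ∈ D_4 : ⟨α,P⟩ ≠ 0 } = n − q^{k−1} + q^{k−h}(q−1)^{h−s}ψ_s + 1, and there are exactly C(h,s)·(q−1)^s such α. -/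

import Mathlib

/-- `ψ_s = ((q-1)^s + (-1)^s (q-1))/q` (an exact integer division). -/
def psi (q s : ℕ) : ℤ := (((q : ℤ) - 1) ^ s + (-1) ^ s * ((q : ℤ) - 1)) / (q : ℤ)

open Finset

section Counting

variable {F ι : Type*} [Field F] [Fintype F] [DecidableEq F] [Fintype ι] [DecidableEq ι]

/-- Vectors with nonzero entries on `J` that are orthogonal to `α`. -/
def orthNonzeroOn (J : Finset ι) (α : ι → F) : Finset (ι → F) :=
  {x | (∀ i ∈ J, x i ≠ 0) ∧ ∑ i, α i * x i = 0}

lemma sum_mulShift_nonzero {χ : AddChar F ℂ} (hχ : χ.IsPrimitive) (b : F) :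
    ∑ x with x ≠ 0, χ (x * b) = if b = 0 then (Fintype.card F : ℂ) - 1 else -1 := by
  have h := AddChar.sum_mulShift b hχ
  rw [← Finset.sum_filter_add_sum_filter_not univ (fun x : F => x ≠ 0)] at h
  have h0 : ({x : F | ¬ x ≠ 0} : Finset F) = {0} := by ext; simp
  rw [h0] at h
  simp only [sum_singleton, zero_mul, AddChar.map_zero_eq_one] at h
  split_ifs at h ⊢ <;> linear_combination h

/-- Orthogonality of additive characters counts the solutions of `⟨α, x⟩ = 0` with nonzero
entries on `J`. -/
lemma card_mul_card_orthNonzeroOn (J : Finset ι) (α : ι → F) :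
    (Fintype.card F : ℤ) * #(orthNonzeroOn J α) =
      (∏ i, if i ∈ J then (Fintype.card F : ℤ) - 1 else Fintype.card F) +
      ((Fintype.card F : ℤ) - 1) *
        ∏ i, if i ∈ J then (if α i = 0 then (Fintype.card F : ℤ) - 1 else -1)
          else if α i = 0 then (Fintype.card F : ℤ) else 0 := by
  obtain ⟨χ, hχ⟩ : ∃ χ : AddChar F ℂ, χ.IsPrimitive :=
    ⟨_, AddChar.FiniteField.primitiveChar_to_Complex_isPrimitive F⟩
  let A : ι → Finset F := fun i => if i ∈ J then univ.filter (· ≠ 0) else univ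
  have hset : orthNonzeroOn J α = {x ∈ Fintype.piFinset A | ∑ i, α i * x i = 0} := by
    ext x
    simp only [orthNonzeroOn, mem_filter, mem_univ, true_and, Fintype.mem_piFinset, A]
    refine and_congr_left fun _ => forall_congr' fun i => ?_
    split_ifs with hi <;> simp [hi]
  have hfac (t : F) (i : ι) : ∑ x ∈ A i, χ (x * (t * α i)) =
      if i ∈ J then (if t * α i = 0 then (Fintype.card F : ℂ) - 1 else -1)
          else if t * α i = 0 then (Fintype.card F : ℂ) else 0 := by
    by_cases hi : i ∈ J
    · simp only [A, hi, if_true]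
      exact sum_mulShift_nonzero hχ _
    · simp only [A, hi, if_false]
      simpa using AddChar.sum_mulShift (t * α i) hχ
  have hdouble : (Fintype.card F : ℂ) * #(orthNonzeroOn J α) =
      ∑ t : F, ∏ i, ∑ x ∈ A i, χ (x * (t * α i)) := by
    simp_rw [Finset.prod_univ_sum]
    rw [Finset.sum_comm, hset, Finset.card_filter]
    push_cast
    rw [Finset.mul_sum]
    refine Finset.sum_congr rfl fun x _ => ?_
    have := AddChar.sum_mulShift (∑ i, α i * x i) hχ
    calc _ = ∑ t : F, χ (t * ∑ i, α i * x i) := by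
          rw [this]; split_ifs <;> simp
      _ = _ := Finset.sum_congr rfl fun t _ => by
          rw [Finset.mul_sum]
          refine (map_prod χ.toMonoidHom (fun i => Multiplicative.ofAdd (t * (α i * x i)))
            univ).trans (Finset.prod_congr rfl fun i _ => ?_)
          rw [AddChar.toMonoidHom_apply, toAdd_ofAdd]
          congr 1
          ring
  rw [← Finset.add_sum_erase univ _ (mem_univ (0 : F))] at hdouble
  rw [Finset.sum_congr rfl (g := fun _ => ∏ i,
      if i ∈ J then (if α i = 0 then (Fintype.card F : ℂ) - 1 else -1)
        else if α i = 0 then (Fintype.card F : ℂ) else 0)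
      (fun t ht => Finset.prod_congr rfl fun i _ => by
        rw [hfac]; simp [ne_of_mem_erase ht])] at hdouble
  simp only [hfac] at hdouble
  simp only [zero_mul, if_true, sum_const, card_erase_of_mem (mem_univ (0 : F)),
    card_univ, nsmul_eq_mul, Nat.cast_sub (Fintype.card_pos (α := F)), Nat.cast_one] at hdouble
  apply Int.cast_injective (α := ℂ)
  push_cast
  exact hdouble

lemma card_orthNonzeroOn_zero (J : Finset ι) :
    (#(orthNonzeroOn J (0 : ι → F)) : ℤ) =
      ((Fintype.card F : ℤ) - 1) ^ #J * (Fintype.card F : ℤ) ^ (Fintype.card ι - #J) := by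
  have h := card_mul_card_orthNonzeroOn J (0 : ι → F)
  have hq : (Fintype.card F : ℤ) ≠ 0 := by exact_mod_cast Fintype.card_ne_zero
  have hp : (∏ i, if i ∈ J then (Fintype.card F : ℤ) - 1 else Fintype.card F) =
      ((Fintype.card F : ℤ) - 1) ^ #J * (Fintype.card F : ℤ) ^ (Fintype.card ι - #J) := by
    simp [Finset.prod_ite, Finset.filter_not, Finset.card_sdiff]
  simp only [Pi.zero_apply, if_true] at h
  rw [hp] at h
  apply mul_left_cancel₀ hq
  linear_combination h

lemma card_mul_card_orthNonzeroOn_of_exists {J : Finset ι} {α : ι → F}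
    (hα : ∃ i ∉ J, α i ≠ 0) :
    (Fintype.card F : ℤ) * #(orthNonzeroOn J α) =
      ((Fintype.card F : ℤ) - 1) ^ #J * (Fintype.card F : ℤ) ^ (Fintype.card ι - #J) := by
  obtain ⟨i, hiJ, hi⟩ := hα
  have hzero : (∏ i, if i ∈ J then (if α i = 0 then (Fintype.card F : ℤ) - 1 else -1)
      else if α i = 0 then (Fintype.card F : ℤ) else 0) = 0 :=
    Finset.prod_eq_zero (mem_univ i) (by simp [hiJ, hi])
  rw [card_mul_card_orthNonzeroOn, hzero]
  simp [Finset.prod_ite, Finset.filter_not, Finset.card_sdiff]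

lemma card_mul_card_orthNonzeroOn_of_support_subset {J : Finset ι} {α : ι → F}
    (hα : ∀ i ∉ J, α i = 0) {s : ℕ} (hs : #{i ∈ J | α i ≠ 0} = s) :
    (Fintype.card F : ℤ) * #(orthNonzeroOn J α) =
      (Fintype.card F : ℤ) ^ (Fintype.card ι - #J) * ((Fintype.card F : ℤ) - 1) ^ (#J - s) *
      (((Fintype.card F : ℤ) - 1) ^ s + (-1) ^ s * ((Fintype.card F : ℤ) - 1)) := by
  have hsJ : s ≤ #J := hs ▸ card_filter_le _ _
  have hz : #{i ∈ J | α i = 0} = #J - s := by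
    have := Finset.card_filter_add_card_filter_not (s := J) (fun i => α i = 0)
    simp only [← ne_eq] at this
    omega
  have hcompl : #(univ.filter (· ∉ J)) = Fintype.card ι - #J := by
    simp [Finset.filter_not, Finset.card_sdiff]
  have hin : (∏ i ∈ J, if α i = 0 then (Fintype.card F : ℤ) - 1 else -1) =
      ((Fintype.card F : ℤ) - 1) ^ (#J - s) * (-1) ^ s := by
    rw [Finset.prod_ite, prod_const, prod_const, hz, hs]
  have hout : (∏ i with i ∉ J, if α i = 0 then (Fintype.card F : ℤ) else 0) =
      (Fintype.card F : ℤ) ^ (Fintype.card ι - #J) := by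
    rw [← hcompl, ← prod_const]
    exact Finset.prod_congr rfl fun i hi => by simp [hα i (by simpa using hi)]
  rw [card_mul_card_orthNonzeroOn, Finset.prod_ite, Finset.prod_ite, hout, prod_const, prod_const,
    hcompl, filter_mem_eq_inter, univ_inter, hin]
  obtain ⟨d, hd⟩ := Nat.exists_eq_add_of_le hsJ
  rw [hd, Nat.add_sub_cancel_left]
  ring

/-- The nonzero vectors vanishing somewhere on `J` and orthogonal to `α`. -/
lemma card_orth_vanishing (J : Finset ι) (hJ : J.Nonempty) (α : ι → F) :
    #{x : ι → F | (x ≠ 0 ∧ ∃ i ∈ J, x i = 0) ∧ ∑ i, α i * x i = 0} + 1 + #(orthNonzeroOn J α) =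
      #(orthNonzeroOn ∅ α) := by
  obtain ⟨j, hj⟩ := hJ
  set S : Finset (ι → F) := {x | (x ≠ 0 ∧ ∃ i ∈ J, x i = 0) ∧ ∑ i, α i * x i = 0} with hS
  have h0 : (0 : ι → F) ∉ S := by simp [hS]
  have hdisj : Disjoint (insert 0 S) (orthNonzeroOn J α) := by
    rw [Finset.disjoint_left]
    intro x hx hx'
    simp only [orthNonzeroOn, mem_filter, mem_univ, true_and] at hx'
    rcases mem_insert.1 hx with rfl | hx
    · exact hx'.1 j hj rfl
    · simp only [hS, mem_filter, mem_univ, true_and] at hx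
      obtain ⟨i, hi, hxi⟩ := hx.1.2
      exact hx'.1 i hi hxi
  rw [← card_insert_of_notMem h0, ← card_union_of_disjoint hdisj]
  congr 1
  ext x
  simp only [hS, orthNonzeroOn, mem_union, mem_insert, mem_filter, mem_univ, true_and,
    notMem_empty, false_imp_iff, implies_true]
  by_cases hx : x = 0
  · simp [hx]
  · by_cases hJx : ∃ i ∈ J, x i = 0
    · simp [hx, hJx]
    · push Not at hJx
      simp only [hx, false_or]
      grind

lemma card_nonorth_vanishing (J : Finset ι) (hJ : J.Nonempty) {α : ι → F} (hα : α ≠ 0) :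
    (#{x : ι → F | (x ≠ 0 ∧ ∃ i ∈ J, x i = 0) ∧ ∑ i, α i * x i ≠ 0} : ℤ) =
      #{x : ι → F | x ≠ 0 ∧ ∃ i ∈ J, x i = 0} - (Fintype.card F : ℤ) ^ (Fintype.card ι - 1) +
        #(orthNonzeroOn J α) + 1 := by
  obtain ⟨i, hi⟩ := Function.ne_iff.1 hα
  have hq : (Fintype.card F : ℤ) ≠ 0 := by exact_mod_cast Fintype.card_ne_zero
  have hE : (#(orthNonzeroOn ∅ α) : ℤ) = (Fintype.card F : ℤ) ^ (Fintype.card ι - 1) := by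
    apply mul_left_cancel₀ hq
    rw [card_mul_card_orthNonzeroOn_of_exists ⟨i, notMem_empty i, hi⟩]
    rw [mul_pow_sub_one (Fintype.card_pos_iff.2 ⟨i⟩).ne']
    simp
  have hsplit := Finset.card_filter_add_card_filter_not
    (s := ({x : ι → F | x ≠ 0 ∧ ∃ i ∈ J, x i = 0} : Finset _)) (fun x => ∑ i, α i * x i = 0)
  rw [filter_filter, filter_filter] at hsplit
  have := card_orth_vanishing J hJ α
  rw [← hE]
  simp only [ne_eq] at *
  omega

lemma card_vanishing (J : Finset ι) (hJ : J.Nonempty) :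
    (#{x : ι → F | x ≠ 0 ∧ ∃ i ∈ J, x i = 0} : ℤ) =
      (Fintype.card F : ℤ) ^ (Fintype.card ι - #J) *
        ((Fintype.card F : ℤ) ^ #J - ((Fintype.card F : ℤ) - 1) ^ #J) - 1 := by
  have h := card_orth_vanishing J hJ (0 : ι → F)
  simp only [Pi.zero_apply, zero_mul, sum_const_zero, and_true] at h
  zify at h
  rw [card_orthNonzeroOn_zero, card_orthNonzeroOn_zero, card_empty, Nat.sub_zero, pow_zero, one_mul,
    ← Nat.sub_add_cancel (card_le_univ J), pow_add, Nat.add_sub_cancel] at h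
  linear_combination h

lemma card_support_subset (J : Finset ι) :
    #{α : ι → F | ∀ i ∉ J, α i = 0} = Fintype.card F ^ #J := by
  have : ({α : ι → F | ∀ i ∉ J, α i = 0} : Finset _) =
      Fintype.piFinset fun i => if i ∈ J then univ else {0} := by
    ext α
    simp only [mem_filter, mem_univ, true_and, Fintype.mem_piFinset]
    refine forall_congr' fun i => ?_
    split_ifs with hi <;> simp [hi]
  rw [this, Fintype.card_piFinset]
  simp [apply_ite]

lemma card_exists_notMem_ne_zero (J : Finset ι) :
    #{α : ι → F | ∃ i ∉ J, α i ≠ 0} =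
      Fintype.card F ^ Fintype.card ι - Fintype.card F ^ #J := by
  rw [← card_support_subset J, ← Fintype.card_fun, ← card_compl]
  congr 1
  ext α
  simp

lemma card_support_eq (S : Finset ι) :
    #{α : ι → F | ({i | α i ≠ 0} : Finset ι) = S} = (Fintype.card F - 1) ^ #S := by
  have : ({α : ι → F | ({i | α i ≠ 0} : Finset ι) = S} : Finset _) =
      Fintype.piFinset fun i => if i ∈ S then {0}ᶜ else {0} := by
    ext α
    simp only [mem_filter, mem_univ, true_and, Fintype.mem_piFinset, Finset.ext_iff]
    refine forall_congr' fun i => ?_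
    split_ifs with hi <;> simp [hi]
  rw [this, Fintype.card_piFinset]
  simp [apply_ite, card_compl]

lemma card_support_subset_card_eq (J : Finset ι) (s : ℕ) :
    #{α : ι → F | (∀ i ∉ J, α i = 0) ∧ #{i ∈ J | α i ≠ 0} = s} =
      (#J).choose s * (Fintype.card F - 1) ^ s := by
  have key (α : ι → F) : ((∀ i ∉ J, α i = 0) ∧ #{i ∈ J | α i ≠ 0} = s) ↔
      ({i | α i ≠ 0} : Finset ι) ∈ powersetCard s J := by
    rw [mem_powersetCard]
    have h1 : (∀ i ∉ J, α i = 0) ↔ ({i | α i ≠ 0} : Finset ι) ⊆ J := by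
      simp only [subset_iff, mem_filter, mem_univ, true_and]
      exact forall_congr' fun i => not_imp_comm
    rw [h1]
    refine and_congr_right fun h => ?_
    have : J.filter (fun i => α i ≠ 0) = univ.filter (fun i => α i ≠ 0) := by
      ext i
      simp only [mem_filter, mem_univ, true_and, and_iff_right_iff_imp]
      exact fun hi => h (by simpa using hi)
    rw [this]
  simp_rw [key]
  rw [Finset.card_eq_sum_card_fiberwise (f := fun α : ι → F => ({i | α i ≠ 0} : Finset ι))
    (t := powersetCard s J) (fun α hα => by simpa using hα)]
  rw [Finset.sum_congr rfl (g := fun _ => (Fintype.card F - 1) ^ s), sum_const, card_powersetCard,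
    smul_eq_mul]
  intro S hS
  rw [← (mem_powersetCard.1 hS).2, ← card_support_eq S, filter_filter]
  congr 1
  ext α
  simp only [mem_filter, mem_univ, true_and, and_iff_right_iff_imp]
  rintro rfl
  rwa [(mem_powersetCard.1 hS).2]

end Counting

lemma mul_psi (q s : ℕ) :
    (q : ℤ) * psi q s = ((q : ℤ) - 1) ^ s + (-1) ^ s * ((q : ℤ) - 1) := by
  refine Int.mul_ediv_cancel' ?_
  have h : (q : ℤ) ∣ ((q : ℤ) - 1) ^ s - (-1) ^ s := by
    simpa using sub_dvd_pow_sub_pow ((q : ℤ) - 1) (-1) s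
  have hsum := dvd_add h (Dvd.intro_left ((-1 : ℤ) ^ s) rfl)
  rwa [show ((q : ℤ) - 1) ^ s - (-1) ^ s + (-1) ^ s * q =
    ((q : ℤ) - 1) ^ s + (-1) ^ s * ((q : ℤ) - 1) by ring] at hsum

theorem stmt17 (q : ℕ) (F : Type*) [Field F] [Fintype F] (hF : Fintype.card F = q)
    (k h : ℕ) (hh : 3 ≤ h) (hhk : h ≤ k)
    (D4 : Set (Fin k → F))
    (hD4 : D4 = {x | x ≠ 0 ∧ ∏ i : Fin h, x (Fin.castLE hhk i) = 0})
    (n : ℕ) (hn : n = Nat.card D4) :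
    -- (a)
    ((n : ℤ) = (q : ℤ) ^ (k - h) * ((q : ℤ) ^ h - ((q : ℤ) - 1) ^ h) - 1)
    ∧
    -- (b)
    (h < k →
      (∀ α : Fin k → F, (∃ i : Fin k, h ≤ (i : ℕ) ∧ α i ≠ 0) →
        (Nat.card {P : Fin k → F // P ∈ D4 ∧ ∑ i, α i * P i ≠ 0} : ℤ)
          = (n : ℤ) - (q : ℤ) ^ (k - 1) + (q : ℤ) ^ (k - h - 1) * ((q : ℤ) - 1) ^ h + 1)
      ∧ Nat.card {α : Fin k → F // ∃ i : Fin k, h ≤ (i : ℕ) ∧ α i ≠ 0} = q ^ k - q ^ h)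
    ∧
    -- (c)
    (∀ s : ℕ, 1 ≤ s → s ≤ h →
      (∀ α : Fin k → F, (∀ m : Fin k, h ≤ (m : ℕ) → α m = 0) →
        Nat.card {i : Fin k // (i : ℕ) < h ∧ α i ≠ 0} = s →
        (Nat.card {P : Fin k → F // P ∈ D4 ∧ ∑ i, α i * P i ≠ 0} : ℤ)
          = (n : ℤ) - (q : ℤ) ^ (k - 1)
              + (q : ℤ) ^ (k - h) * ((q : ℤ) - 1) ^ (h - s) * psi q s + 1)
      ∧ Nat.card {α : Fin k → F // (∀ m : Fin k, h ≤ (m : ℕ) → α m = 0) ∧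
          Nat.card {i : Fin k // (i : ℕ) < h ∧ α i ≠ 0} = s}
        = Nat.choose h s * (q - 1) ^ s) := by
  classical
  subst hF
  let J : Finset (Fin k) := {i | (i : ℕ) < h}
  have hJmem (i : Fin k) : i ∈ J ↔ (i : ℕ) < h := by simp [J]
  have hnot (i : Fin k) : h ≤ (i : ℕ) ↔ i ∉ J := by simp [J]
  have hJcard : #J = h := by simp [J, Fin.card_filter_val_lt, hhk]
  have hJ : J.Nonempty := card_pos.1 (by omega)
  have hq : (Fintype.card F : ℤ) ≠ 0 := by exact_mod_cast Fintype.card_ne_zero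
  have hmem (x : Fin k → F) : x ∈ D4 ↔ x ≠ 0 ∧ ∃ i ∈ J, x i = 0 := by
    rw [hD4, Set.mem_ofPred_eq, Finset.prod_eq_zero_iff]
    refine and_congr_right fun _ => ⟨?_, ?_⟩
    · rintro ⟨i, -, hi⟩
      exact ⟨_, (hJmem _).2 i.2, hi⟩
    · rintro ⟨i, hi, hxi⟩
      exact ⟨⟨i, (hJmem i).1 hi⟩, mem_univ _, hxi⟩
  have hcard (p : (Fin k → F) → Prop) [DecidablePred p] : Nat.card {x // p x} = #{x | p x} := by
    rw [Nat.card_eq_fintype_card, Fintype.card_subtype]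
  have hsub (α : Fin k → F) :
      Nat.card {i : Fin k // (i : ℕ) < h ∧ α i ≠ 0} = #{i ∈ J | α i ≠ 0} := by
    rw [Nat.card_eq_fintype_card, Fintype.card_subtype, filter_filter]
  have hn' : n = #{x : Fin k → F | x ≠ 0 ∧ ∃ i ∈ J, x i = 0} := by
    rw [hn, ← hcard]
    exact Nat.card_congr (Equiv.subtypeEquivRight hmem)
  have hweight {α : Fin k → F} (hα : α ≠ 0) :
      (Nat.card {P : Fin k → F // P ∈ D4 ∧ ∑ i, α i * P i ≠ 0} : ℤ) =
        n - (Fintype.card F : ℤ) ^ (k - 1) + #(orthNonzeroOn J α) + 1 := by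
    simp_rw [hcard, hmem, hn']
    simpa using card_nonorth_vanishing J hJ hα
  refine ⟨?_, fun hlt => ⟨fun α hα => ?_, ?_⟩, fun s hs hsh => ⟨fun α hα hαs => ?_, ?_⟩⟩
  · have hvan := card_vanishing (F := F) J hJ
    rw [hJcard, Fintype.card_fin] at hvan
    rw [hn', ← hvan]
    congr!
  · simp only [hnot] at hα
    obtain ⟨i, -, hi⟩ := id hα
    rw [hweight (Function.ne_iff.2 ⟨i, hi⟩)]
    congr 2
    apply mul_left_cancel₀ hq
    rw [card_mul_card_orthNonzeroOn_of_exists hα, hJcard, Fintype.card_fin, ← mul_assoc,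
      mul_pow_sub_one (by omega), mul_comm]
  · simp only [hnot]
    have hcount := card_exists_notMem_ne_zero (F := F) J
    rw [hJcard, Fintype.card_fin] at hcount
    rw [hcard, ← hcount]
    congr!
  · simp only [hnot] at hα
    rw [hsub] at hαs
    have hα0 : α ≠ 0 := by
      rintro rfl
      simp at hαs
      omega
    rw [hweight hα0]
    congr 2
    apply mul_left_cancel₀ hq
    rw [card_mul_card_orthNonzeroOn_of_support_subset hα hαs, hJcard, Fintype.card_fin, ← mul_psi]
    ring
  · simp only [hnot, hsub]
    have hcount := card_support_subset_card_eq (F := F) J s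
    rw [hJcard] at hcount
    rw [hcard, ← hcount]
    congr!
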